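/- Suppose Ω is an Abelian domain in the sense that the derivative of its Schwarz function extends meromorphically to Ω: there are finitely many distinct points a_1, …, a_n ∈ Ω, an open neighborhood V of Γ, a holomorphic function S on V with S(z) = conj(z) on Γ, and a holomorphic function s on (Ω \ {a_1, …, a_n}) ∪ V with s = S' on V. Then for every function f holomorphic on an open set containing closure(Ω) and every ε > 0 small enough that the closed disks of radius ε around the a_j are pairwise disjoint and contained in Ω \ V: (1/π) ∫_Ω f' dA = −Σ_{j=1}^n (1/(2πi)) ∮_{|z−a_j|=ε} f(z)·s(z) dz, where ∮_{|z−a_j|=ε} denotes the integral over the positively oriented circle of radius ε centered at a_j. -/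

import Mathlib

open Complex MeasureTheory Filter Topology Bornology

/-- The range of a differentiable curve is a null set. -/
lemma null_range_curve (γ : ℝ → ℂ) (h : Differentiable ℝ γ) :
    volume (Set.range γ) = 0 := by
  have h1 : volume ({z : ℂ | z.im = 0}) = 0 := by
    have := Measure.addHaar_submodule (volume : Measure ℂ) (LinearMap.ker Complex.imLm)
      (by
        intro h
        have : (I : ℂ) ∈ LinearMap.ker Complex.imLm := by rw [h]; trivial
        simp at this)
    have he : {z : ℂ | z.im = 0} = (LinearMap.ker Complex.imLm : Set ℂ) := by
      ext z; simp
    rw [he]; exact this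
  have h2 := addHaar_image_eq_zero_of_differentiableOn_of_addHaar_eq_zero
    (f := fun z : ℂ => γ z.re) (s := {z : ℂ | z.im = 0}) (volume : Measure ℂ)
    (by
      apply Differentiable.differentiableOn
      exact h.comp Complex.reCLM.differentiable) h1
  refine measure_mono_null ?_ h2
  rintro _ ⟨t, rfl⟩
  exact ⟨(t : ℂ), by simp, by simp⟩

/-- A segment from inside to outside crosses the frontier. -/
lemma exists_frontier_segment (Ω : Set ℂ) (x y : ℂ) (hx : x ∈ Ω) (hy : y ∉ Ω) :
    ∃ p ∈ frontier Ω, ‖x - p‖ ≤ ‖x - y‖ := by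
  have hc : IsPreconnected (segment ℝ x y) := (convex_segment x y).isPreconnected
  have : (segment ℝ x y ∩ frontier Ω).Nonempty := by
    by_contra hne
    rw [Set.not_nonempty_iff_eq_empty] at hne
    have := hc (interior Ω) (closure Ω)ᶜ isOpen_interior isClosed_closure.isOpen_compl
      (by
        intro z hz
        by_cases h1 : z ∈ interior Ω
        · exact Or.inl h1
        · right
          intro h2
          have : z ∈ segment ℝ x y ∩ frontier Ω := ⟨hz, h2, h1⟩
          rw [hne] at this; exact this)
      ⟨x, left_mem_segment ℝ x y, by
        by_contra h1
        have : x ∈ segment ℝ x y ∩ frontier Ω := ⟨left_mem_segment ℝ x y, subset_closure hx, h1⟩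
        rw [hne] at this; exact this⟩
      ⟨y, right_mem_segment ℝ x y, by
        intro h1
        have : y ∈ segment ℝ x y ∩ frontier Ω :=
          ⟨right_mem_segment ℝ x y, h1, fun h => hy (interior_subset h)⟩
        rw [hne] at this; exact this⟩
    obtain ⟨z, -, h1, h2⟩ := this
    exact h2 (subset_closure (interior_subset h1))
  obtain ⟨p, hp, hpf⟩ := this
  refine ⟨p, hpf, ?_⟩
  have := norm_sub_le_of_mem_segment hp
  rw [norm_sub_rev x p, norm_sub_rev x y]
  exact this

/-- Real version on the whole plane. -/
lemma lemA_real (Ω : Set ℂ) (hΩ : IsOpen Ω) (hn : volume (frontier Ω) = 0)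
    (u : ℂ → ℝ) (hu : ContDiff ℝ 1 u) (hc : HasCompactSupport u)
    (h0 : ∀ z ∈ frontier Ω, u z = 0) (v : ℂ) :
    ∫ z in Ω, fderiv ℝ u z v = 0 := by
  classical
  obtain ⟨C, hC⟩ := hu.lipschitzWith_of_hasCompactSupport hc one_ne_zero
  set w : ℂ → ℝ := Ω.indicator u with hw
  have key : ∀ x ∈ Ω, ∀ y ∉ Ω, |u x| ≤ C * ‖x - y‖ := by
    intro x hx y hy
    obtain ⟨p, hp, hle⟩ := exists_frontier_segment Ω x y hx hy
    have h1 := hC.dist_le_mul x p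
    rw [h0 p hp, Real.dist_eq, sub_zero, dist_eq_norm] at h1
    exact h1.trans (by gcongr)
  have hwL : LipschitzWith C w := by
    refine LipschitzWith.of_dist_le_mul fun x y => ?_
    by_cases hx : x ∈ Ω <;> by_cases hy : y ∈ Ω
    · simpa [hw, hx, hy] using hC.dist_le_mul x y
    · simpa [hw, hx, hy, Real.dist_eq, dist_eq_norm] using key x hx y hy
    · have := key y hy x hx
      rw [norm_sub_rev] at this
      simpa [hw, hx, hy, Real.dist_eq, dist_eq_norm] using this
    · simp [hw, hx, hy]
      positivity
  have hwc : HasCompactSupport w := by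
    refine hc.mono ?_
    intro z hz
    rw [Function.mem_support, hw] at hz
    intro h
    apply hz
    by_cases hx : z ∈ Ω <;> simp [hx, h]
  have h1 := (LipschitzWith.const (1 : ℝ) : LipschitzWith 0 (fun _ : ℂ => (1:ℝ))).integral_lineDeriv_mul_eq
    (μ := volume) hwL hwc (-v)
  have h2 : ∫ x, lineDeriv ℝ w x v = 0 := by
    have hc0 : ∀ x : ℂ, lineDeriv ℝ (fun _ : ℂ => (1:ℝ)) x (-v) = 0 := by
      intro x; simp [lineDeriv]
    simpa [hc0] using h1.symm
  rw [← h2, ← integral_indicator hΩ.measurableSet]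
  apply integral_congr_ae
  have hae : ∀ᵐ z : ℂ, z ∉ frontier Ω := measure_eq_zero_iff_ae_notMem.1 hn
  filter_upwards [hae] with z hz
  by_cases hx : z ∈ Ω
  · rw [Set.indicator_of_mem hx]
    have : w =ᶠ[𝓝 z] u := by
      filter_upwards [hΩ.mem_nhds hx] with y hy
      simp [hw, hy]
    have hd : DifferentiableAt ℝ w z :=
      (hu.differentiable one_ne_zero z).congr_of_eventuallyEq this
    rw [hd.lineDeriv_eq_fderiv, this.fderiv_eq]
  · rw [Set.indicator_of_notMem hx]
    have hcl : z ∈ (closure Ω)ᶜ := by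
      intro h
      exact hz ⟨h, fun h' => hx (interior_subset h')⟩
    have : w =ᶠ[𝓝 z] fun _ => 0 := by
      filter_upwards [isClosed_closure.isOpen_compl.mem_nhds hcl] with y hy
      have : y ∉ Ω := fun h => hy (subset_closure h)
      simp [hw, this]
    have hd : DifferentiableAt ℝ w z :=
      (differentiableAt_const _).congr_of_eventuallyEq this
    rw [hd.lineDeriv_eq_fderiv, this.fderiv_eq]
    simp

/-- Smooth cutoff equal to one near a compact set. -/
lemma exists_cutoff (K U : Set ℂ) (hK : IsCompact K) (hU : IsOpen U) (hKU : K ⊆ U) :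
    ∃ χ : ℂ → ℝ, ContDiff ℝ 3 χ ∧ HasCompactSupport χ ∧ tsupport χ ⊆ U ∧
      ∀ x ∈ K, ∀ᶠ y in 𝓝 x, χ y = 1 := by
  obtain ⟨L, hL, hKL, hLU⟩ := exists_compact_between hK hU hKU
  obtain ⟨χ, h1, h2, -⟩ := exists_contMDiffMap_one_nhds_of_subset_interior (n := 3)
    (modelWithCornersSelf ℝ ℂ) hK.isClosed hKL
  have hts : tsupport (χ : ℂ → ℝ) ⊆ L := by
    apply closure_minimal _ hL.isClosed
    intro x hx
    by_contra h
    exact hx (h2 x h)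
  refine ⟨χ, χ.contMDiff.contDiff, ?_, hts.trans hLU, ?_⟩
  · exact hL.of_isClosed_subset (isClosed_tsupport _) hts
  · intro x hx
    exact (eventually_nhdsSet_iff_forall.1 h1) x hx

/-- multiplying by a cutoff supported in the domain of smoothness. -/
lemma contDiff_cutoff_mul {n : WithTop ℕ∞} (χ : ℂ → ℝ) (u : ℂ → ℂ) (U : Set ℂ)
    (hχ : ContDiff ℝ n χ) (hs : tsupport χ ⊆ U) (hu : ∀ z ∈ U, ContDiffAt ℝ n u z) :
    ContDiff ℝ n (fun z => (χ z : ℂ) * u z) := by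
  rw [contDiff_iff_contDiffAt]
  intro z
  by_cases hz : z ∈ tsupport χ
  · exact (Complex.ofRealCLM.contDiff.comp hχ).contDiffAt.mul (hu z (hs hz))
  · have : (fun z => (χ z : ℂ) * u z) =ᶠ[𝓝 z] fun _ => 0 := by
      filter_upwards [notMem_tsupport_iff_eventuallyEq.1 hz] with y hy
      simp [hy]
    exact contDiffAt_const.congr_of_eventuallyEq this

lemma lemA (Ω W : Set ℂ) (hΩ : IsOpen Ω) (hb : IsBounded Ω) (hn : volume (frontier Ω) = 0)
    (hW : IsOpen W) (hΩW : closure Ω ⊆ W)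
    (u : ℂ → ℂ) (hu : ∀ z ∈ W, ContDiffAt ℝ 1 u z)
    (h0 : ∀ z ∈ frontier Ω, u z = 0) (v : ℂ) :
    ∫ z in Ω, fderiv ℝ u z v = 0 := by
  have hK : IsCompact (closure Ω) := hb.isCompact_closure
  obtain ⟨χ, hχ, hχc, hχs, hχ1⟩ := exists_cutoff _ _ hK hW hΩW
  set w : ℂ → ℂ := fun z => (χ z : ℂ) * u z with hw
  have hwd : ContDiff ℝ 1 w := contDiff_cutoff_mul χ u W (hχ.of_le (by norm_num)) hχs hu
  have hwc : HasCompactSupport w := by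
    refine hχc.mono ?_
    intro z hz h
    exact hz (by simp [hw, h])
  have heq : ∀ z ∈ closure Ω, w =ᶠ[𝓝 z] u := by
    intro z hz
    filter_upwards [hχ1 z hz] with y hy
    simp [hw, hy]
  have hw0 : ∀ z ∈ frontier Ω, w z = 0 := fun z hz => by simp [hw, h0 z hz]
  have e1 : ∫ z in Ω, fderiv ℝ u z v = ∫ z in Ω, fderiv ℝ w z v := by
    apply setIntegral_congr_fun hΩ.measurableSet
    intro z hz
    simp only
    rw [(heq z (subset_closure hz)).fderiv_eq]
  rw [e1]
  have hre := lemA_real Ω hΩ hn (fun z => (w z).re) (Complex.reCLM.contDiff.comp hwd)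
    (hwc.comp_left (g := Complex.re) rfl) (fun z hz => by simp [hw0 z hz]) v
  have him := lemA_real Ω hΩ hn (fun z => (w z).im) (Complex.imCLM.contDiff.comp hwd)
    (hwc.comp_left (g := Complex.im) rfl) (fun z hz => by simp [hw0 z hz]) v
  have dre : ∀ z, fderiv ℝ (fun z => (w z).re) z v = (fderiv ℝ w z v).re := by
    intro z
    have := (Complex.reCLM.hasFDerivAt.comp z (hwd.differentiable one_ne_zero z).hasFDerivAt).fderiv
    exact congrArg (fun L => L v) this
  have dim : ∀ z, fderiv ℝ (fun z => (w z).im) z v = (fderiv ℝ w z v).im := by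
    intro z
    have := (Complex.imCLM.hasFDerivAt.comp z (hwd.differentiable one_ne_zero z).hasFDerivAt).fderiv
    exact congrArg (fun L => L v) this
  simp only [dre] at hre
  simp only [dim] at him
  have hint : IntegrableOn (fun z => fderiv ℝ w z v) Ω := by
    have hcont : Continuous (fun z => fderiv ℝ w z v) :=
      (hwd.continuous_fderiv one_ne_zero).clm_apply continuous_const
    exact (hcont.continuousOn.integrableOn_compact hK).mono_set subset_closure
  apply Complex.ext
  · exact (integral_re hint).symm.trans hre
  · exact (integral_im hint).symm.trans him

/-- twice the Wirtinger derivative with respect to the conjugate variable -/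
noncomputable def dbar (u : ℂ → ℂ) (z : ℂ) : ℂ := fderiv ℝ u z 1 + I * fderiv ℝ u z I
/-- twice the holomorphic Wirtinger derivative -/
noncomputable def dhol (u : ℂ → ℂ) (z : ℂ) : ℂ := fderiv ℝ u z 1 - I * fderiv ℝ u z I

lemma contAt_fderiv (u : ℂ → ℂ) (z v : ℂ) (hu : ContDiffAt ℝ 1 u z) :
    ContinuousAt (fun z => fderiv ℝ u z v) z :=
  ((hu.fderiv_right (m := 0) (by norm_num)).continuousAt).clm_apply continuousAt_const

lemma lemA_both (Ω W : Set ℂ) (hΩ : IsOpen Ω) (hb : IsBounded Ω) (hn : volume (frontier Ω) = 0)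
    (hW : IsOpen W) (hΩW : closure Ω ⊆ W)
    (u : ℂ → ℂ) (hu : ∀ z ∈ W, ContDiffAt ℝ 1 u z)
    (h0 : ∀ z ∈ frontier Ω, u z = 0) :
    (IntegrableOn (dbar u) Ω ∧ ∫ z in Ω, dbar u z = 0) ∧
      (IntegrableOn (dhol u) Ω ∧ ∫ z in Ω, dhol u z = 0) := by
  have hK : IsCompact (closure Ω) := hb.isCompact_closure
  have hint : ∀ v, IntegrableOn (fun z => fderiv ℝ u z v) Ω := by
    intro v
    have hcont : ContinuousOn (fun z => fderiv ℝ u z v) (closure Ω) := fun z hz =>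
      (contAt_fderiv u z v (hu z (hΩW hz))).continuousWithinAt
    exact (hcont.integrableOn_compact hK).mono_set subset_closure
  have A := lemA Ω W hΩ hb hn hW hΩW u hu h0
  have hI : ∫ z in Ω, I * fderiv ℝ u z I = 0 := by
    rw [integral_const_mul, A, mul_zero]
  refine ⟨⟨(hint 1).add ((hint I).const_mul I), ?_⟩, (hint 1).sub ((hint I).const_mul I), ?_⟩
  · unfold dbar
    rw [integral_add (hint 1) ((hint I).const_mul I), A, hI, add_zero]
  · unfold dhol
    rw [integral_sub (hint 1) ((hint I).const_mul I), A, hI, sub_zero]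

lemma fderiv_mul_apply' (u w : ℂ → ℂ) (z v : ℂ) (hu : DifferentiableAt ℝ u z)
    (hw : DifferentiableAt ℝ w z) :
    fderiv ℝ (fun z => u z * w z) z v = u z * fderiv ℝ w z v + w z * fderiv ℝ u z v := by
  have : fderiv ℝ (fun z => u z * w z) z = _ := (hu.hasFDerivAt.mul hw.hasFDerivAt).fderiv
  have h2 := congrArg (fun L => L v) this
  simpa using h2

lemma dbar_mul (u w : ℂ → ℂ) (z : ℂ) (hu : DifferentiableAt ℝ u z)
    (hw : DifferentiableAt ℝ w z) :
    dbar (fun z => u z * w z) z = u z * dbar w z + w z * dbar u z := by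
  simp only [dbar, fderiv_mul_apply' u w z _ hu hw]; ring

lemma dhol_mul (u w : ℂ → ℂ) (z : ℂ) (hu : DifferentiableAt ℝ u z)
    (hw : DifferentiableAt ℝ w z) :
    dhol (fun z => u z * w z) z = u z * dhol w z + w z * dhol u z := by
  simp only [dhol, fderiv_mul_apply' u w z _ hu hw]; ring

lemma fderiv_of_hol (f : ℂ → ℂ) (z v : ℂ) (hf : DifferentiableAt ℂ f z) :
    fderiv ℝ f z v = v * deriv f z := by
  have := (hf.hasDerivAt.hasFDerivAt.restrictScalars ℝ).fderiv
  have h2 := congrArg (fun L => L v) this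
  simpa using h2

lemma dbar_of_hol (f : ℂ → ℂ) (z : ℂ) (hf : DifferentiableAt ℂ f z) : dbar f z = 0 := by
  simp only [dbar, fderiv_of_hol f z _ hf]
  linear_combination deriv f z * I_mul_I

lemma dhol_of_hol (f : ℂ → ℂ) (z : ℂ) (hf : DifferentiableAt ℂ f z) :
    dhol f z = 2 * deriv f z := by
  simp only [dhol, fderiv_of_hol f z _ hf]
  linear_combination -deriv f z * I_mul_I

lemma dbar_conj (z : ℂ) : dbar (fun z => (starRingEnd ℂ) z) z = 2 := by
  have : fderiv ℝ (fun z : ℂ => (starRingEnd ℂ) z) z = (conjCLE : ℂ →L[ℝ] ℂ) :=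
    (conjCLE : ℂ →L[ℝ] ℂ).hasFDerivAt.fderiv
  simp only [dbar, this]
  simp
  norm_num

lemma dbar_sub (u w : ℂ → ℂ) (z : ℂ) (hu : DifferentiableAt ℝ u z)
    (hw : DifferentiableAt ℝ w z) :
    dbar (fun z => u z - w z) z = dbar u z - dbar w z := by
  have h : fderiv ℝ (fun z => u z - w z) z = _ := fderiv_fun_sub hu hw
  simp only [dbar, h, _root_.sub_apply]; ring

lemma dbar_congr {u w : ℂ → ℂ} {z : ℂ} (h : u =ᶠ[𝓝 z] w) : dbar u z = dbar w z := by
  simp only [dbar, h.fderiv_eq]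

lemma dhol_congr {u w : ℂ → ℂ} {z : ℂ} (h : u =ᶠ[𝓝 z] w) : dhol u z = dhol w z := by
  simp only [dhol, h.fderiv_eq]

lemma contDiff_fderiv_apply (P : ℂ → ℂ) (v : ℂ) (hP : ContDiff ℝ 3 P) :
    ContDiff ℝ 2 (fun z => fderiv ℝ P z v) :=
  (hP.fderiv_right (m := 2) (by norm_num)).clm_apply contDiff_const

lemma contDiff_dbar (P : ℂ → ℂ) (hP : ContDiff ℝ 3 P) : ContDiff ℝ 2 (dbar P) :=
  (contDiff_fderiv_apply P 1 hP).add (contDiff_const.mul (contDiff_fderiv_apply P I hP))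

lemma contDiff_dhol (P : ℂ → ℂ) (hP : ContDiff ℝ 3 P) : ContDiff ℝ 2 (dhol P) :=
  (contDiff_fderiv_apply P 1 hP).sub (contDiff_const.mul (contDiff_fderiv_apply P I hP))

lemma dhol_dbar_comm (P : ℂ → ℂ) (hP : ContDiff ℝ 3 P) (z : ℂ) :
    dhol (dbar P) z = dbar (dhol P) z := by
  have hd : DifferentiableAt ℝ (fderiv ℝ P) z :=
    (hP.fderiv_right (m := 2) (by norm_num)).differentiable (by norm_num) z
  have happ : ∀ v, HasFDerivAt (fun z => fderiv ℝ P z v)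
      ((ContinuousLinearMap.apply ℝ ℂ v).comp (fderiv ℝ (fderiv ℝ P) z)) z := fun v =>
    (ContinuousLinearMap.apply ℝ ℂ v).hasFDerivAt.comp z hd.hasFDerivAt
  have hsymm : IsSymmSndFDerivAt ℝ P z :=
    (hP.contDiffAt).isSymmSndFDerivAt (by simp; norm_num)
  have hs := hsymm.eq 1 I
  have h1 : fderiv ℝ (dbar P) z = _ := ((happ 1).add ((happ I).const_mul I)).fderiv
  have h2 : fderiv ℝ (dhol P) z = _ := ((happ 1).sub ((happ I).const_mul I)).fderiv
  rw [dhol, dbar, h1, h2]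
  simp
  linear_combination (2 * I) * hs

/-- radial profile -/
noncomputable def rprof (ε r : ℝ) : ℝ := Real.smoothTransition (2 - 8 / ε ^ 2 * r ^ 2)

/-- radial bump -/
noncomputable def rbump (a : ℂ) (ε : ℝ) (z : ℂ) : ℝ :=
  Real.smoothTransition (2 - 8 / ε ^ 2 * ((z.re - a.re) ^ 2 + (z.im - a.im) ^ 2))

lemma contDiff_re_sub (a : ℝ) {n : WithTop ℕ∞} : ContDiff ℝ n (fun z : ℂ => z.re - a) :=
  (Complex.reCLM.contDiff).sub contDiff_const
lemma contDiff_im_sub (a : ℝ) {n : WithTop ℕ∞} : ContDiff ℝ n (fun z : ℂ => z.im - a) :=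
  (Complex.imCLM.contDiff).sub contDiff_const

lemma contDiff_rbump (a : ℂ) (ε : ℝ) : ContDiff ℝ 3 (rbump a ε) := by
  unfold rbump
  exact Real.smoothTransition.contDiff.comp (contDiff_const.sub (contDiff_const.mul
    (((contDiff_re_sub a.re).pow 2).add ((contDiff_im_sub a.im).pow 2))))

lemma rbump_eq (a : ℂ) (ε : ℝ) (z : ℂ) : rbump a ε z = rprof ε (dist z a) := by
  have : (z.re - a.re) ^ 2 + (z.im - a.im) ^ 2 = dist z a ^ 2 := by
    rw [dist_eq_norm, ← Complex.normSq_eq_norm_sq, Complex.normSq_apply]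
    simp; ring
  rw [rbump, rprof, this]

lemma rprof_zero (ε r : ℝ) (hε : 0 < ε) (hr : ε / 2 ≤ r) : rprof ε r = 0 := by
  apply Real.smoothTransition.zero_of_nonpos
  have h1 : (ε / 2) ^ 2 ≤ r ^ 2 := by gcongr
  have : 8 / ε ^ 2 * (ε / 2) ^ 2 ≤ 8 / ε ^ 2 * r ^ 2 := by gcongr
  have h2 : 8 / ε ^ 2 * (ε / 2) ^ 2 = 2 := by field_simp; norm_num
  linarith

lemma rprof_one (ε r : ℝ) (hε : 0 < ε) (h0 : 0 ≤ r) (hr : r ≤ ε / 4) : rprof ε r = 1 := by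
  apply Real.smoothTransition.one_of_one_le
  have h1 : r ^ 2 ≤ (ε / 4) ^ 2 := by gcongr
  have : 8 / ε ^ 2 * r ^ 2 ≤ 8 / ε ^ 2 * (ε / 4) ^ 2 := by gcongr
  have h2 : 8 / ε ^ 2 * (ε / 4) ^ 2 = 1 / 2 := by field_simp; norm_num
  linarith

lemma rbump_zero (a : ℂ) (ε : ℝ) (hε : 0 < ε) (z : ℂ) (h : ε / 2 < dist z a) :
    (fun z => (rbump a ε z : ℂ)) =ᶠ[𝓝 z] fun _ => 0 := by
  have : ∀ᶠ y in 𝓝 z, ε / 2 < dist y a :=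
    (continuous_id.dist continuous_const).continuousAt.eventually_const_lt h
  filter_upwards [this] with y hy
  rw [rbump_eq, rprof_zero ε _ hε hy.le]; simp

lemma rbump_one (a : ℂ) (ε : ℝ) (hε : 0 < ε) :
    (fun z => (rbump a ε z : ℂ)) =ᶠ[𝓝 a] fun _ => 1 := by
  filter_upwards [Metric.ball_mem_nhds a (show 0 < ε / 4 by positivity)] with y hy
  rw [rbump_eq, rprof_one ε _ hε dist_nonneg (Metric.mem_ball.1 hy).le]; simp

lemma contDiff_crbump (a : ℂ) (ε : ℝ) : ContDiff ℝ 3 (fun z => (rbump a ε z : ℂ)) :=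
  Complex.ofRealCLM.contDiff.comp (contDiff_rbump a ε)

lemma dbar_const (c z : ℂ) : dbar (fun _ => c) z = 0 := by
  simp [dbar]

lemma dbar_rbump (a : ℂ) (ε r : ℝ) (e : ℂ) (he : e.re ^ 2 + e.im ^ 2 = 1) :
    dbar (fun z => (rbump a ε z : ℂ)) (a + r * e) = ((deriv (rprof ε) r : ℝ) : ℂ) * e := by
  set T := Real.smoothTransition
  have hT : ∀ x, HasDerivAt T (deriv T x) x := fun x =>
    ((Real.smoothTransition.contDiff (n := 1)).differentiable one_ne_zero x).hasDerivAt
  have hρ : HasDerivAt (rprof ε)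
      (deriv T (2 - 8 / ε ^ 2 * r ^ 2) * -(8 / ε ^ 2 * (2 * r))) r := by
    have h1 : HasDerivAt (fun r : ℝ => 2 - 8 / ε ^ 2 * r ^ 2) (-(8 / ε ^ 2 * (2 * r))) r := by
      simpa using ((hasDerivAt_pow 2 r).const_mul (8 / ε ^ 2)).const_sub 2
    exact (hT _).comp r h1
  set z := a + r * e with hz
  have hx : HasFDerivAt (fun z : ℂ => z.re - a.re) Complex.reCLM z :=
    Complex.reCLM.hasFDerivAt.sub_const _
  have hy : HasFDerivAt (fun z : ℂ => z.im - a.im) Complex.imCLM z :=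
    Complex.imCLM.hasFDerivAt.sub_const _
  have hq := (((hx.pow 2).add (hy.pow 2)).const_mul (8 / ε ^ 2)).const_sub 2
  have hb := (hT (2 - 8 / ε ^ 2 * ((z.re - a.re) ^ 2 + (z.im - a.im) ^ 2))).comp_hasFDerivAt z hq
  have hc := Complex.ofRealCLM.hasFDerivAt.comp z hb
  have hf : fderiv ℝ (fun z => (rbump a ε z : ℂ)) z = _ := hc.fderiv
  have hre : z.re - a.re = r * e.re := by simp [hz]
  have him : z.im - a.im = r * e.im := by simp [hz]
  have hsq : (z.re - a.re) ^ 2 + (z.im - a.im) ^ 2 = r ^ 2 := by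
    rw [hre, him]; linear_combination r ^ 2 * he
  rw [hsq, hre, him] at hf
  rw [dbar, hf, hρ.deriv]
  simp
  linear_combination (-((deriv T (2 - 8 / ε ^ 2 * r ^ 2) : ℝ) : ℂ) * (8 / (ε : ℂ) ^ 2 * (2 * r)))
    * Complex.re_add_im e

lemma polar_lemma (a : ℂ) (ε : ℝ) (hε : 0 < ε) (g : ℂ → ℂ)
    (hg : ∀ z ∈ Metric.closedBall a ε, z ≠ a → DifferentiableAt ℂ g z) :
    Continuous (fun z => g z * dbar (fun z => (rbump a ε z : ℂ)) z) ∧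
    ∫ z, g z * dbar (fun z => (rbump a ε z : ℂ)) z = I * ∮ z in C(a, ε), g z := by
  set k := fun z => g z * dbar (fun z => (rbump a ε z : ℂ)) z with hk
  have hB : Continuous (dbar (fun z => (rbump a ε z : ℂ))) :=
    (contDiff_dbar _ (contDiff_crbump a ε)).continuous
  have hk0 : ∀ z, ε / 2 < dist z a → k z = 0 := by
    intro z hz
    simp [hk, dbar_congr (rbump_zero a ε hε z hz), dbar_const]
  have hkc : Continuous k := by
    rw [continuous_iff_continuousAt]
    intro z
    by_cases hz : ε / 2 < dist z a
    · have : k =ᶠ[𝓝 z] fun _ => 0 := by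
        have : ∀ᶠ y in 𝓝 z, ε / 2 < dist y a :=
          (continuous_id.dist continuous_const).continuousAt.eventually_const_lt hz
        filter_upwards [this] with y hy using hk0 y hy
      exact continuousAt_const.congr this.symm
    · by_cases hza : z = a
      · subst hza
        have : k =ᶠ[𝓝 z] fun _ => 0 := by
          filter_upwards [(rbump_one z ε hε).eventuallyEq_nhds] with y hy
          simp [hk, dbar_congr hy, dbar_const]
        exact continuousAt_const.congr this.symm
      · exact (hg z (Metric.mem_closedBall.2 (by linarith)) hza).continuousAt.mul hB.continuousAt
  refine ⟨hkc, ?_⟩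
  set J := ∮ z in C(a, ε), g z with hJ
  have hcirc : ∀ r, 0 < r → r ≤ ε → (∮ z in C(a, r), g z) = J := by
    intro r h0 hr
    rw [hJ]
    symm
    apply Complex.circleIntegral_eq_of_differentiable_on_annulus_off_countable h0 hr
      Set.countable_empty
    · rintro z ⟨h1, h2⟩
      refine (hg z h1 ?_).continuousAt.continuousWithinAt
      rintro rfl
      exact h2 (Metric.mem_ball_self h0)
    · rintro z ⟨⟨h1, h2⟩, -⟩
      refine hg z (Metric.ball_subset_closedBall h1) ?_
      rintro rfl
      exact h2 (Metric.mem_closedBall_self h0.le)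
  have hpol : ∫ z, k z = ∫ p in Set.Ioi (0:ℝ) ×ˢ Set.Ioo (-Real.pi) Real.pi,
      p.1 • k (a + p.1 * (Real.cos p.2 + Real.sin p.2 * I)) := by
    rw [← integral_add_left_eq_self k a, ← Complex.integral_comp_polarCoord_symm]
    simp only [Complex.polarCoord_symm_apply]
    rfl
  set F : ℝ × ℝ → ℂ := fun p => p.1 • k (a + p.1 * (Real.cos p.2 + Real.sin p.2 * I)) with hF
  have hFc : Continuous F := by
    have : Continuous (fun p : ℝ × ℝ => a + p.1 * ((Real.cos p.2 : ℂ) + Real.sin p.2 * I)) := by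
      have h1 : Continuous (fun p : ℝ × ℝ => (Real.cos p.2 : ℂ)) :=
        Complex.continuous_ofReal.comp (Real.continuous_cos.comp continuous_snd)
      have h2 : Continuous (fun p : ℝ × ℝ => (Real.sin p.2 : ℂ)) :=
        Complex.continuous_ofReal.comp (Real.continuous_sin.comp continuous_snd)
      have h3 : Continuous (fun p : ℝ × ℝ => (p.1 : ℂ)) :=
        Complex.continuous_ofReal.comp continuous_fst
      fun_prop
    exact continuous_fst.smul (hkc.comp this)
  have hnorm : ∀ θ : ℝ, (Real.cos θ : ℂ) + Real.sin θ * I = exp (θ * I) := by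
    intro θ; rw [exp_mul_I]; simp
  have hF0 : ∀ p : ℝ × ℝ, ε < p.1 → F p = 0 := by
    intro p hp
    have : k (a + p.1 * (Real.cos p.2 + Real.sin p.2 * I)) = 0 := by
      apply hk0
      rw [hnorm, dist_eq_norm, add_sub_cancel_left, norm_mul, norm_exp_ofReal_mul_I]
      simp
      have := le_abs_self p.1
      linarith
    simp only [hF, this, smul_zero]
  have hrestr : ∫ p in Set.Ioi (0:ℝ) ×ˢ Set.Ioo (-Real.pi) Real.pi, F p =
      ∫ p in Set.Ioc (0:ℝ) ε ×ˢ Set.Ioc (-Real.pi) Real.pi, F p := by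
    have h1 : ∫ p in Set.Ioi (0:ℝ) ×ˢ Set.Ioo (-Real.pi) Real.pi, F p =
        ∫ p in Set.Ioc (0:ℝ) ε ×ˢ Set.Ioo (-Real.pi) Real.pi, F p := by
      apply setIntegral_eq_of_subset_of_forall_sdiff_eq_zero
        (measurableSet_Ioi.prod measurableSet_Ioo)
      · exact Set.prod_mono Set.Ioc_subset_Ioi_self le_rfl
      · rintro p ⟨⟨h1, h2⟩, h3⟩
        apply hF0
        by_contra h4
        exact h3 ⟨⟨h1, not_lt.1 h4⟩, h2⟩
    rw [h1]
    apply setIntegral_congr_set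
    exact Measure.set_prod_ae_eq (ae_eq_refl _) Ioo_ae_eq_Ioc
  have hint : IntegrableOn F (Set.Ioc (0:ℝ) ε ×ˢ Set.Ioc (-Real.pi) Real.pi)
      ((volume : Measure ℝ).prod (volume : Measure ℝ)) := by
    have : IntegrableOn F (Set.Icc (0:ℝ) ε ×ˢ Set.Icc (-Real.pi) Real.pi)
      ((volume : Measure ℝ).prod (volume : Measure ℝ)) :=
      hFc.continuousOn.integrableOn_compact (isCompact_Icc.prod isCompact_Icc)
    exact this.mono_set (Set.prod_mono Set.Ioc_subset_Icc_self Set.Ioc_subset_Icc_self)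
  rw [hpol, hrestr, Measure.volume_eq_prod, setIntegral_prod _ hint]
  have hinner : ∀ r ∈ Set.Ioc (0:ℝ) ε, ∫ θ in Set.Ioc (-Real.pi) Real.pi, F (r, θ) =
      ((deriv (rprof ε) r : ℝ) : ℂ) * (-I * J) := by
    rintro r ⟨h0, hr⟩
    rw [← hcirc r h0 hr, circleIntegral]
    have hper : Function.Periodic
        (fun θ : ℝ => deriv (circleMap a r) θ • g (circleMap a r θ)) (2 * Real.pi) := by
      intro θ
      simp [deriv_circleMap, periodic_circleMap a r θ, periodic_circleMap 0 r θ]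
    have hshift := hper.intervalIntegral_add_eq 0 (-Real.pi)
    rw [zero_add, show -Real.pi + 2 * Real.pi = Real.pi by ring] at hshift
    rw [hshift, ← intervalIntegral.integral_of_le (by linarith [Real.pi_pos]),
      ← intervalIntegral.integral_const_mul, ← intervalIntegral.integral_const_mul]
    apply intervalIntegral.integral_congr
    intro θ _
    have hun : (exp (θ * I)).re ^ 2 + (exp (θ * I)).im ^ 2 = 1 := by
      rw [exp_ofReal_mul_I_re, exp_ofReal_mul_I_im]; exact Real.cos_sq_add_sin_sq θ
    simp only [hF, hk, hnorm]
    rw [dbar_rbump a ε r _ hun]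
    simp only [deriv_circleMap, circleMap, zero_add, smul_eq_mul, real_smul]
    linear_combination ((r : ℂ) * g (a + r * exp (θ * I)) * ((deriv (rprof ε) r : ℝ) : ℂ)
      * exp (θ * I)) * I_mul_I
  rw [setIntegral_congr_fun measurableSet_Ioc hinner, integral_mul_const, integral_complex_ofReal,
    ← intervalIntegral.integral_of_le hε.le]
  have hsm : ContDiff ℝ 1 (rprof ε) := by
    unfold rprof
    exact Real.smoothTransition.contDiff.comp (contDiff_const.sub (contDiff_const.mul
      (contDiff_id.pow 2)))
  rw [intervalIntegral.integral_deriv_eq_sub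
    (fun x _ => hsm.differentiable one_ne_zero x)
    ((hsm.continuous_deriv le_rfl).intervalIntegrable _ _),
    rprof_zero ε ε hε (by linarith), rprof_one ε 0 hε le_rfl (by positivity)]
  simp

lemma integral_combo (Ω : Set ℂ) (A B C D : ℂ → ℂ) (hA : IntegrableOn A Ω)
    (hB : IntegrableOn B Ω) (hC : IntegrableOn C Ω) (hD : IntegrableOn D Ω) :
    ∫ z in Ω, (2 * A z + B z - C z + 2 * D z) =
      2 * (∫ z in Ω, A z) + (∫ z in Ω, B z) - (∫ z in Ω, C z) + 2 * ∫ z in Ω, D z := by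
  have h1 : IntegrableOn (fun z => 2 * A z) Ω := hA.const_mul 2
  have h2 : IntegrableOn (fun z => 2 * A z + B z) Ω := h1.add hB
  have h3 : IntegrableOn (fun z => 2 * A z + B z - C z) Ω := h2.sub hC
  have h4 : IntegrableOn (fun z => 2 * D z) Ω := hD.const_mul 2
  rw [integral_add h3 h4, integral_sub h2 hC, integral_add h1 hB, integral_const_mul,
    integral_const_mul]

lemma smooth_of_hol (f : ℂ → ℂ) (U : Set ℂ) (hU : IsOpen U) (hf : DifferentiableOn ℂ f U)
    {n : WithTop ℕ∞} (z : ℂ) (hz : z ∈ U) : ContDiffAt ℝ n f z :=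
  ((hf.analyticAt (hU.mem_nhds hz)).contDiffAt).restrict_scalars ℝ

/-- If the derivative of the Schwarz function of `Γ` extends meromorphically
to `Ω` (an Abelian domain), then for every `f` holomorphic on a neighborhood of
`closure Ω`, `(1/π) ∫_Ω f' dA = −Σ_j (1/(2πi)) ∮_{|z−a_j|=ε} f(z) s(z) dz`. -/
theorem abelian_domain_quadrature_identity
    (Ω : Set ℂ) (hΩopen : IsOpen Ω) (hΩbdd : Bornology.IsBounded Ω)
    (hΩconn : IsConnected Ω) (hΩsc : SimplyConnectedSpace Ω)
    (γ : ℝ → ℂ) (hγan : ∀ t, AnalyticAt ℝ γ t)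
    (hγper : Function.Periodic γ (2 * Real.pi))
    (hγ' : ∀ t, deriv γ t ≠ 0)
    (hΓ : frontier Ω = Set.range γ)
    (hwind : ∀ z ∈ Ω,
      (1 / (2 * Real.pi * Complex.I)) *
        (∫ t in (0:ℝ)..(2 * Real.pi), deriv γ t / (γ t - z)) = 1)
    (n : ℕ) (a : Fin n → ℂ) (ha : ∀ j, a j ∈ Ω) (hainj : Function.Injective a)
    (V : Set ℂ) (hV : IsOpen V) (hΓV : frontier Ω ⊆ V)
    (S : ℂ → ℂ) (hS : DifferentiableOn ℂ S V)
    (hSval : ∀ z ∈ frontier Ω, S z = (starRingEnd ℂ) z)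
    (s : ℂ → ℂ) (hs : DifferentiableOn ℂ s ((Ω \ Set.range a) ∪ V))
    (hsS' : ∀ z ∈ V, s z = deriv S z)
    (O : Set ℂ) (hO : IsOpen O) (hΩO : closure Ω ⊆ O)
    (f : ℂ → ℂ) (hf : DifferentiableOn ℂ f O)
    (ε : ℝ) (hε : 0 < ε)
    (hballs : ∀ j, Metric.closedBall (a j) ε ⊆ Ω \ V)
    (hdisj : ∀ j k, j ≠ k →
      Disjoint (Metric.closedBall (a j) ε) (Metric.closedBall (a k) ε)) :
    (1 / (Real.pi : ℂ)) * (∫ ζ in Ω, deriv f ζ) =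
      -∑ j : Fin n, (1 / (2 * Real.pi * Complex.I)) *
        (∮ z in C(a j, ε), f z * s z) := by
  have hn : volume (frontier Ω) = 0 := by
    rw [hΓ]; exact null_range_curve γ (fun t => (hγan t).differentiableAt)
  have hK : IsCompact (closure Ω) := hΩbdd.isCompact_closure
  have hdf : ∀ z ∈ O, DifferentiableAt ℂ f z := fun z hz => hf.differentiableAt (hO.mem_nhds hz)
  have hfs : ∀ z ∈ O, ContDiffAt ℝ 1 f z := fun z hz => smooth_of_hol f O hO hf z hz
  have hf'd : DifferentiableOn ℂ (deriv f) O := hf.deriv hO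
  have hf's : ∀ z ∈ O, ContDiffAt ℝ 1 (deriv f) z := fun z hz => smooth_of_hol _ O hO hf'd z hz
  obtain ⟨χ, hχ, -, hχs, hχ1⟩ := exists_cutoff (frontier Ω) V
    (hK.of_isClosed_subset isClosed_frontier frontier_subset_closure) hV hΓV
  obtain ⟨P, hPdef⟩ : ∃ P : ℂ → ℂ, P = fun z => (χ z : ℂ) * S z := ⟨_, rfl⟩
  have hP : ContDiff ℝ 3 P := by
    rw [hPdef]
    exact contDiff_cutoff_mul χ S V hχ hχs (fun z hz => smooth_of_hol S V hV hS z hz)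
  have hPS : ∀ z ∈ frontier Ω, P =ᶠ[𝓝 z] S := by
    intro z hz
    filter_upwards [hχ1 z hz] with y hy
    simp [hPdef, hy]
  have hSd : ∀ z ∈ frontier Ω, DifferentiableAt ℂ S z := fun z hz =>
    hS.differentiableAt (hV.mem_nhds (hΓV hz))
  have hPd : Differentiable ℝ P := hP.differentiable (by norm_num)
  have hconj : ContDiff ℝ 1 (fun z : ℂ => (starRingEnd ℂ) z) := conjCLE.contDiff
  have s1 := (lemA_both Ω O hΩopen hΩbdd hn hO hΩO
    (fun z => deriv f z * ((starRingEnd ℂ) z - P z))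
    (fun z hz => (hf's z hz).mul (hconj.contDiffAt.sub (hP.of_le (by norm_num)).contDiffAt))
    (fun z hz => by
      rw [(hPS z hz).self_of_nhds, hSval z hz, sub_self, mul_zero])).1
  have e1 : ∀ z ∈ Ω, dbar (fun z => deriv f z * ((starRingEnd ℂ) z - P z)) z =
      deriv f z * (2 - dbar P z) := by
    intro z hz
    have hzO := hΩO (subset_closure hz)
    have hcd : DifferentiableAt ℝ (fun z : ℂ => (starRingEnd ℂ) z) z :=
      hconj.differentiable one_ne_zero z
    rw [dbar_mul (deriv f) (fun z => (starRingEnd ℂ) z - P z) z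
      ((hf's z hzO).differentiableAt one_ne_zero) (hcd.sub (hPd z)),
      dbar_of_hol _ z (hf'd.differentiableAt (hO.mem_nhds hzO)),
      dbar_sub _ P z hcd (hPd z), dbar_conj]
    ring
  have hdb := contDiff_dbar P hP
  have hdh := contDiff_dhol P hP
  have s2 := (lemA_both Ω O hΩopen hΩbdd hn hO hΩO (fun z => f z * dbar P z)
    (fun z hz => (hfs z hz).mul (hdb.of_le (by norm_num)).contDiffAt)
    (fun z hz => by
      rw [dbar_congr (hPS z hz), dbar_of_hol S z (hSd z hz), mul_zero])).2
  have e2 : ∀ z ∈ Ω, dhol (fun z => f z * dbar P z) z =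
      f z * dhol (dbar P) z + dbar P z * (2 * deriv f z) := by
    intro z hz
    have hzO := hΩO (subset_closure hz)
    rw [dhol_mul f (dbar P) z ((hfs z hzO).differentiableAt one_ne_zero)
      (hdb.differentiable (by norm_num) z), dhol_of_hol f z (hdf z hzO)]
  obtain ⟨η, hη⟩ : ∃ η : ℂ → ℂ, η = fun z => ∑ j, (rbump (a j) ε z : ℂ) := ⟨_, rfl⟩
  have hηc : ContDiff ℝ 3 η := by
    rw [hη]; exact ContDiff.sum (fun j _ => contDiff_crbump (a j) ε)
  have hηd : Differentiable ℝ η := hηc.differentiable (by norm_num)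
  have hfar : ∀ z ∉ Ω, ∀ j, ε / 2 < dist z (a j) := by
    intro z hz j
    by_contra h
    exact hz (hballs j (Metric.mem_closedBall.2 (by linarith))).1
  have hη1 : ∀ j, η =ᶠ[𝓝 (a j)] fun _ => 1 := by
    intro j
    have hall : ∀ k, k ≠ j → (fun z => (rbump (a k) ε z : ℂ)) =ᶠ[𝓝 (a j)] fun _ => 0 := by
      intro k hk
      apply rbump_zero _ _ hε
      by_contra h
      exact Set.disjoint_left.1 (hdisj j k hk.symm) (Metric.mem_closedBall_self hε.le)
        (Metric.mem_closedBall.2 (by linarith))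
    have hall' : ∀ᶠ z in 𝓝 (a j), ∀ k, k ≠ j → (rbump (a k) ε z : ℂ) = 0 := by
      rw [eventually_all]
      intro k
      by_cases hk : k = j
      · simp [hk]
      · filter_upwards [hall k hk] with y hy _ using hy
    filter_upwards [hall', rbump_one (a j) ε hε] with y h1 h2
    rw [hη]
    simp only
    rw [Finset.sum_eq_single j (fun k _ hk => h1 k hk) (by simp)]
    exact h2
  obtain ⟨Q, hQ⟩ : ∃ Q : ℂ → ℂ, Q = fun z => (f z * s z) * (1 - η z) := ⟨_, rfl⟩
  have hQa : ∀ j, Q =ᶠ[𝓝 (a j)] fun _ => 0 := by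
    intro j
    filter_upwards [hη1 j] with y hy
    rw [hQ]
    simp [hy]
  have haV : ∀ j, a j ∉ V := fun j => (hballs j (Metric.mem_closedBall_self hε.le)).2
  have hrc : IsClosed (Set.range a) := (Set.finite_range a).isClosed
  have hD : IsOpen ((Ω \ Set.range a) ∪ V) := (hΩopen.sdiff hrc).union hV
  have hW : IsOpen (O ∩ (Ω ∪ V)) := hO.inter (hΩopen.union hV)
  have hΩW : closure Ω ⊆ O ∩ (Ω ∪ V) := by
    intro z hz
    refine ⟨hΩO hz, ?_⟩
    by_cases h : z ∈ Ω
    · exact Or.inl h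
    · exact Or.inr (hΓV ⟨hz, fun h' => h (interior_subset h')⟩)
  have hWD : ∀ z ∈ O ∩ (Ω ∪ V), z ∉ Set.range a → z ∈ (Ω \ Set.range a) ∪ V := by
    rintro z ⟨-, h | h⟩ hza
    · exact Or.inl ⟨h, hza⟩
    · exact Or.inr h
  have hQs : ∀ z ∈ O ∩ (Ω ∪ V), ContDiffAt ℝ 1 Q z := by
    intro z hz
    by_cases hza : z ∈ Set.range a
    · obtain ⟨j, rfl⟩ := hza
      exact contDiffAt_const.congr_of_eventuallyEq (hQa j)
    · rw [hQ]
      exact ((hfs z hz.1).mul (smooth_of_hol s _ hD hs z (hWD z hz hza))).mul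
        (contDiffAt_const.sub (hηc.of_le (by norm_num)).contDiffAt)
  have s3 := (lemA_both Ω _ hΩopen hΩbdd hn hW hΩW
    (fun z => f z * dhol P z - 2 * Q z)
    (fun z hz => ((hfs z hz.1).mul (hdh.of_le (by norm_num)).contDiffAt).sub
      (contDiffAt_const.mul (hQs z hz)))
    (fun z hz => by
      have hzΩ : z ∉ Ω := fun h => hz.2 (hΩopen.interior_eq.symm ▸ h)
      have h0 : η z = 0 := by
        rw [hη]
        exact Finset.sum_eq_zero (fun j _ => (rbump_zero _ _ hε z (hfar z hzΩ j)).self_of_nhds)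
      rw [dhol_congr (hPS z hz), dhol_of_hol S z (hSd z hz), hQ, ← hsS' z (hΓV hz)]
      simp only [h0]
      ring)).1
  have hpl : ∀ j, _ := fun j => polar_lemma (a j) ε hε (fun z => f z * s z) (by
    intro z hz hza
    have hzΩ := (hballs j hz).1
    have hzO := hΩO (subset_closure hzΩ)
    refine (hdf z hzO).mul (hs.differentiableAt (hD.mem_nhds (Or.inl ⟨hzΩ, ?_⟩)))
    rintro ⟨k, rfl⟩
    have hkj : k ≠ j := fun h => hza (by rw [h])
    exact Set.disjoint_left.1 (hdisj k j hkj) (Metric.mem_closedBall_self hε.le) hz)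
  obtain ⟨k, hk⟩ : ∃ k : Fin n → ℂ → ℂ, k = fun j z =>
    (fun z => f z * s z) z * dbar (fun z => (rbump (a j) ε z : ℂ)) z := ⟨_, rfl⟩
  have hkint : ∀ j, IntegrableOn (k j) Ω := by
    intro j
    have : Continuous (k j) := by rw [hk]; exact (hpl j).1
    exact (this.continuousOn.integrableOn_compact hK).mono_set subset_closure
  have hkval : ∀ j, ∫ z in Ω, k j z = I * ∮ z in C(a j, ε), f z * s z := by
    intro j
    rw [setIntegral_eq_integral_of_forall_compl_eq_zero, hk]
    · exact (hpl j).2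
    · intro z hz
      rw [hk]
      simp only
      rw [dbar_congr (rbump_zero _ _ hε z (hfar z hz j)), dbar_const, mul_zero]
  have hdη : ∀ z, dbar η z = ∑ j, dbar (fun z => (rbump (a j) ε z : ℂ)) z := by
    intro z
    have : fderiv ℝ η z = ∑ j, fderiv ℝ (fun z => (rbump (a j) ε z : ℂ)) z := by
      rw [hη]
      exact fderiv_fun_sum (fun j _ => (contDiff_crbump (a j) ε).differentiable (by norm_num) z)
    simp only [dbar, this, _root_.sum_apply, Finset.sum_add_distrib, Finset.mul_sum]
  have hdQ : ∀ z ∈ Ω, dbar Q z = -∑ j, k j z := by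
    intro z hz
    have hzO := hΩO (subset_closure hz)
    have hks : ∑ j, k j z = (f z * s z) * dbar η z := by
      rw [hdη, hk, Finset.mul_sum]
    rw [hks]
    by_cases hza : z ∈ Set.range a
    · obtain ⟨j, rfl⟩ := hza
      rw [dbar_congr (hQa j), dbar_congr (hη1 j), dbar_const, dbar_const]; simp
    · have hfsd : DifferentiableAt ℂ (fun z => f z * s z) z :=
        (hdf z hzO).mul (hs.differentiableAt (hD.mem_nhds (Or.inl ⟨hz, hza⟩)))
      rw [hQ, dbar_mul (fun z => f z * s z) (fun z => 1 - η z) z (hfsd.restrictScalars ℝ)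
        ((differentiableAt_const _).sub (hηd z)), dbar_of_hol _ z hfsd,
        dbar_sub (fun _ => 1) η z (differentiableAt_const _) (hηd z), dbar_const]
      ring
  have e3 : ∀ z ∈ Ω, dbar (fun z => f z * dhol P z - 2 * Q z) z =
      f z * dhol (dbar P) z + 2 * ∑ j, k j z := by
    intro z hz
    have hzO := hΩO (subset_closure hz)
    have hfd := (hfs z hzO).differentiableAt one_ne_zero
    have hhd : DifferentiableAt ℝ (dhol P) z := hdh.differentiable (by norm_num) z
    have hQd : DifferentiableAt ℝ Q z :=
      (hQs z (hΩW (subset_closure hz))).differentiableAt one_ne_zero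
    rw [dbar_sub (fun z => f z * dhol P z) (fun z => 2 * Q z) z (hfd.mul hhd)
      (hQd.const_mul 2), dbar_mul f (dhol P) z hfd hhd,
      dbar_mul (fun _ => 2) Q z (differentiableAt_const _) hQd, dbar_const,
      dbar_of_hol f z (hdf z hzO), hdQ z hz, ← dhol_dbar_comm P hP z]
    ring
  have hsum : ∫ z in Ω, ∑ j, k j z = ∑ j, I * ∮ z in C(a j, ε), f z * s z := by
    rw [integral_finsetSum _ (fun j _ => hkint j)]
    exact Finset.sum_congr rfl (fun j _ => hkval j)
  have hsint : IntegrableOn (fun z => ∑ j, k j z) Ω :=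
    integrable_finsetSum _ (fun j _ => hkint j)
  have hmain : ∫ z in Ω, 4 * deriv f z = 2 * ∑ j, I * ∮ z in C(a j, ε), f z * s z := by
    have hcongr : ∫ z in Ω, 4 * deriv f z = ∫ z in Ω,
        (2 * dbar (fun z => deriv f z * ((starRingEnd ℂ) z - P z)) z
          + dhol (fun z => f z * dbar P z) z
          - dbar (fun z => f z * dhol P z - 2 * Q z) z + 2 * ∑ j, k j z) := by
      apply setIntegral_congr_fun hΩopen.measurableSet
      intro z hz
      simp only
      rw [e1 z hz, e2 z hz, e3 z hz]
      ring
    rw [hcongr, integral_combo Ω _ _ _ _ s1.1 s2.1 s3.1 hsint, s1.2, s2.2, s3.2, hsum]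
    ring
  rw [integral_const_mul, ← Finset.mul_sum] at hmain
  rw [← Finset.mul_sum]
  have hpi : (Real.pi : ℂ) ≠ 0 := by exact_mod_cast Real.pi_ne_zero
  have hval : ∫ z in Ω, deriv f z = I / 2 * ∑ j, ∮ z in C(a j, ε), f z * s z := by
    linear_combination hmain / 4
  rw [hval]
  field_simp
  rw [I_sq]
  ring
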